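/- Let r ≥ 2, let j_1 be an odd positive integer, and let j_i ≥ 0 be integers for 2 ≤ i ≤ r − 1. Then ∑_{k ∈ I_{2^r}^*} cot(kπ/2^r) · cot(kπ/4)^{j_1} · ∏_{i=2}^{r−1} ( ∏_{j ∈ I_{2^i}^*} cot(jkπ/2^{i+1}) )^{j_i} = 2^{r−1}, where the outer sum is over the odd integers k with 1 ≤ k ≤ 2^r − 1 and each inner product is over the odd integers j with 1 ≤ j ≤ 2^i − 1. (All angles occurring are not integer multiples of π, so every cotangent is defined.) -/

import Mathlib

/-!
The cotangent of an odd multiple of `π / 4` is `±1`, so an odd power of it is the value itself.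
The factors of an inner product at `l` and `n - l` have angles summing to an odd multiple of
`π / 2`, so they are mutually inverse and the product is `1`.

What remains is `∑ cot (k π / N) cot (k π / 4)` with `N = 4 m`. On each residue class of `k`
modulo `4` the second factor is constant, and the sum of the first is given by the multiplication
formula `∑ j < m, cot (z + j π / m) = m cot (m z)`. The classes of `1` and `3` contribute `m` each.
The multiplication formula is the partial fraction expansion of `m / (1 - a ^ m)` over the
`m`-th roots of unity, evaluated at `a = exp (2 i z)`.
-/

section MultiplicationFormula

open Finset

open Polynomial in
theorem sum_one_div_one_sub_primitive_root_pow_mul {F : Type*} [Field F] {n : ℕ} {ζ : F}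
    (hζ : IsPrimitiveRoot ζ n) {a : F} (ha : a ^ n ≠ 1) :
    ∑ j ∈ range n, 1 / (1 - ζ ^ j * a) = n / (1 - a ^ n) := by
  have hroots : (X ^ n - C (a ^ n)).roots = (Multiset.range n).map (ζ ^ · * a) :=
    hζ.nthRoots_eq rfl
  have hsplits : (X ^ n - C (a ^ n)).Splits := by
    rw [splits_iff_card_roots, hroots, Multiset.card_map, Multiset.card_range,
      natDegree_X_pow_sub_C]
  have heval : (X ^ n - C (a ^ n)).eval 1 ≠ 0 := by
    simpa [sub_eq_zero] using ha.symm
  have hexpansion := hsplits.eval_derivative_div_eval_of_ne_zero heval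
  simpa [-map_pow, hroots, derivative_X_pow, Finset.sum] using hexpansion.symm

open scoped Real
open Complex

theorem complex_cot_eq_I_mul {z : ℂ} (hz : exp (2 * I * z) ≠ 1) :
    cot z = I * (1 - 2 * (1 / (1 - exp (2 * I * z)))) := by
  have hz' : 1 - exp (2 * I * z) ≠ 0 := sub_ne_zero.2 hz.symm
  rw [cot_eq_exp_ratio]
  field_simp
  rw [I_sq]
  ring

theorem exp_two_mul_I_mul_ne_one_of_sin_ne_zero {z : ℂ} (hz : sin z ≠ 0) :
    exp (2 * I * z) ≠ 1 := by
  contrapose! hz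
  obtain ⟨n, hn⟩ := exp_eq_one_iff.1 hz
  refine sin_eq_zero_iff.2 ⟨n, mul_left_cancel₀ two_pi_I_ne_zero ?_⟩
  linear_combination (π : ℂ) * hn

theorem complex_sum_cot_add_mul_pi_div (m : ℕ) {z : ℂ} (hz : sin (m * z) ≠ 0) :
    ∑ j ∈ range m, cot (z + j * π / m) = m * cot (m * z) := by
  have hm : m ≠ 0 := by rintro rfl; simp at hz
  have hζ : IsPrimitiveRoot (exp (2 * π * I / m)) m := isPrimitiveRoot_exp m hm
  have hpow : exp (2 * I * z) ^ m = exp (2 * I * (m * z)) := by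
    rw [← exp_nat_mul]
    ring_nf
  have hne : exp (2 * I * (m * z)) ≠ 1 := exp_two_mul_I_mul_ne_one_of_sin_ne_zero hz
  have hshift (j : ℕ) :
      exp (2 * I * (z + j * π / m)) = exp (2 * π * I / m) ^ j * exp (2 * I * z) := by
    rw [← exp_nat_mul, ← exp_add]
    ring_nf
  have hshift_ne (j : ℕ) : exp (2 * I * (z + j * π / m)) ≠ 1 := by
    rw [hshift]
    intro h
    refine hne ?_
    calc exp (2 * I * (m * z)) = (exp (2 * π * I / m) ^ j * exp (2 * I * z)) ^ m := by
          rw [mul_pow, pow_right_comm, hζ.pow_eq_one, one_pow, one_mul, hpow]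
      _ = 1 := by rw [h, one_pow]
  calc ∑ j ∈ range m, cot (z + j * π / m)
      = ∑ j ∈ range m, I * (1 - 2 * (1 / (1 - exp (2 * π * I / m) ^ j * exp (2 * I * z)))) :=
        sum_congr rfl fun j _ => by rw [complex_cot_eq_I_mul (hshift_ne j), hshift]
    _ = I * (m - 2 * (m / (1 - exp (2 * I * (m * z))))) := by
        rw [← mul_sum, sum_sub_distrib, ← mul_sum,
          sum_one_div_one_sub_primitive_root_pow_mul hζ (by rwa [hpow]),
          hpow, sum_const, card_range, nsmul_one]
    _ = m * cot (m * z) := by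
        rw [complex_cot_eq_I_mul hne]
        ring

end MultiplicationFormula

section OddSums

open Finset Real

theorem sum_cot_add_mul_pi_div (m : ℕ) {x : ℝ} (hx : sin (m * x) ≠ 0) :
    ∑ j ∈ range m, cot (x + j * π / m) = m * cot (m * x) := by
  have hxC : Complex.sin (m * x) ≠ 0 := by exact_mod_cast hx
  exact_mod_cast complex_sum_cot_add_mul_pi_div m hxC

theorem sin_mul_pi_div_ne_zero {a d : ℕ} (hd : d ≠ 0) (had : ¬ d ∣ a) :
    sin (a * π / d) ≠ 0 := by
  intro h
  obtain ⟨n, hn⟩ := sin_eq_zero_iff.1 h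
  have hna : (a : ℝ) = d * n := by
    field_simp at hn
    linear_combination -hn
  exact had (Int.natCast_dvd_natCast.1 ⟨n, by exact_mod_cast hna⟩)

theorem sum_cot_arithmetic_progression_mul_pi_div (m : ℕ) {a d : ℕ} (hd : d ≠ 0) (had : ¬ d ∣ a) :
    ∑ j ∈ range m, cot (((d * j + a : ℕ) : ℝ) * π / (d * m)) = m * cot (a * π / d) := by
  rcases eq_or_ne m 0 with rfl | hm
  · simp
  have hangle : (m : ℝ) * (a * π / (d * m)) = a * π / d := by field_simp
  rw [← hangle, ← sum_cot_add_mul_pi_div m (hangle ▸ sin_mul_pi_div_ne_zero hd had)]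
  refine sum_congr rfl fun j _ => congrArg cot ?_
  push_cast
  field_simp
  ring

theorem cot_four_mul_add_one_mul_pi_div_four (j : ℕ) :
    cot (((4 * j + 1 : ℕ) : ℝ) * π / 4) = 1 := by
  have hangle : ((4 * j + 1 : ℕ) : ℝ) * π / 4 = π / 4 + j * π := by push_cast; ring
  rw [hangle, ← tan_inv_eq_cot, tan_add_nat_mul_pi, tan_pi_div_four, inv_one]

theorem cot_four_mul_add_three_mul_pi_div_four (j : ℕ) :
    cot (((4 * j + 3 : ℕ) : ℝ) * π / 4) = -1 := by
  have hangle : ((4 * j + 3 : ℕ) : ℝ) * π / 4 = -(π / 4) + (j + 1 : ℕ) * π := by push_cast; ring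
  rw [hangle, ← tan_inv_eq_cot, tan_add_nat_mul_pi, tan_neg, tan_pi_div_four, inv_neg, inv_one]

theorem cot_mul_pi_div_four_zpow {k : ℕ} (hk : Odd k) {e : ℤ} (he : Odd e) :
    cot (k * π / 4) ^ e = cot (k * π / 4) := by
  rcases Nat.odd_mod_four_iff.1 (Nat.odd_iff.1 hk) with h | h
  · rw [← Nat.div_add_mod k 4, h, cot_four_mul_add_one_mul_pi_div_four, one_zpow]
  · rw [← Nat.div_add_mod k 4, h, cot_four_mul_add_three_mul_pi_div_four, he.neg_one_zpow]

theorem sum_filter_odd_range_four_mul {M : Type*} [AddCommMonoid M] (f : ℕ → M) (m : ℕ) :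
    ∑ k ∈ (range (4 * m)).filter (fun k => Odd k), f k =
      ∑ j ∈ range m, f (4 * j + 1) + ∑ j ∈ range m, f (4 * j + 3) := by
  rw [sum_filter, ← sum_add_distrib]
  induction m with
  | zero => simp
  | succ m ih =>
    have heven : ¬ Odd (4 * m) := by grind
    have hthree : Odd 3 := by decide
    simp [mul_add_one, sum_range_succ, ih, Nat.odd_add, add_assoc, heven, hthree]

theorem sum_cot_mul_cot_eq_two_mul (m : ℕ) :
    ∑ k ∈ (range (4 * m)).filter (fun k => Odd k), cot (k * π / (4 * m)) * cot (k * π / 4) =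
      2 * m := by
  have hclass {a : ℕ} (ha : ¬ 4 ∣ a) :
      ∑ j ∈ range m, cot (((4 * j + a : ℕ) : ℝ) * π / (4 * m)) = m * cot (a * π / 4) := by
    simpa only [Nat.cast_ofNat] using sum_cot_arithmetic_progression_mul_pi_div m four_ne_zero ha
  have hcot_one : cot ((1 : ℕ) * π / 4) = 1 := by
    simpa only [mul_zero, zero_add] using cot_four_mul_add_one_mul_pi_div_four 0
  have hcot_three : cot ((3 : ℕ) * π / 4) = -1 := by
    simpa only [mul_zero, zero_add] using cot_four_mul_add_three_mul_pi_div_four 0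
  rw [sum_filter_odd_range_four_mul]
  simp only [cot_four_mul_add_one_mul_pi_div_four, cot_four_mul_add_three_mul_pi_div_four,
    ← sum_mul]
  rw [hclass (by norm_num), hclass (by norm_num), hcot_one, hcot_three]
  ring

theorem cot_mul_cot_eq_one {x y : ℝ} (hx : sin x ≠ 0) (hy : sin y ≠ 0) (hxy : cos (x + y) = 0) :
    cot x * cot y = 1 := by
  rw [cos_add, sub_eq_zero] at hxy
  rw [cot_eq_cos_div_sin, cot_eq_cos_div_sin, div_mul_div_comm, hxy,
    div_self (mul_ne_zero hx hy)]

theorem cos_odd_mul_pi_div_two {k : ℕ} (hk : Odd k) : cos (k * π / 2) = 0 := by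
  obtain ⟨m, rfl⟩ := hk
  exact cos_eq_zero_iff.2 ⟨m, by push_cast; ring⟩

theorem prod_cot_odd_eq_one {n k : ℕ} (hn : 4 ∣ n) (hk : Odd k) :
    ∏ l ∈ (range n).filter (fun l => Odd l), cot ((l : ℝ) * k * π / (2 * n)) = 1 := by
  rcases eq_or_ne n 0 with rfl | hn0
  · simp
  have hsin {l : ℕ} (hl : Odd l) : sin ((l : ℝ) * k * π / (2 * n)) ≠ 0 := by
    have hndvd : ¬ 2 * n ∣ l * k := fun h =>
      (hl.mul hk).not_two_dvd_nat ((Nat.dvd_mul_right 2 n).trans h)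
    simpa using sin_mul_pi_div_ne_zero (by omega) hndvd
  refine prod_involution (fun l _ => n - l) (fun l hl => ?_) (by grind) (by grind) (by grind)
  obtain ⟨hln, hlodd⟩ := mem_filter.1 hl
  have hodd : Odd (n - l) := by grind
  refine cot_mul_cot_eq_one (hsin hlodd) (hsin hodd) ?_
  rw [← cos_odd_mul_pi_div_two hk, Nat.cast_sub (mem_range.1 hln).le]
  congr 1
  field_simp
  ring

theorem sum_cot_prod_cot_eq_two_pow_general {ι : Type*} (m : ℕ) {e : ℤ} (he : Odd e)
    (s : Finset ι) {n : ι → ℕ} (hn : ∀ i ∈ s, 4 ∣ n i) (j : ι → ℤ) :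
    ∑ k ∈ (range (4 * m)).filter (fun k => Odd k),
        cot (k * π / (4 * m)) * cot (k * π / 4) ^ e *
          ∏ i ∈ s, (∏ l ∈ (range (n i)).filter (fun l => Odd l),
            cot ((l : ℝ) * k * π / (2 * n i))) ^ j i =
      2 * m := by
  rw [← sum_cot_mul_cot_eq_two_mul]
  refine sum_congr rfl fun k hk => ?_
  have hkodd : Odd k := (mem_filter.1 hk).2
  rw [cot_mul_pi_div_four_zpow hkodd he, prod_eq_one, mul_one]
  intro i hi
  rw [prod_cot_odd_eq_one (hn i hi) hkodd, one_zpow]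

end OddSums

open Real in
/-- **The cotangent-sum identity underlying Donnelly's η-formula for `ℤ_{2^r}`-manifolds.**
Let `r ≥ 2`, let `j₁` be an odd positive integer, and let `j i ≥ 0` for `2 ≤ i ≤ r − 1`.  Then
`∑_{k ∈ I_{2^r}^*} cot(kπ/2^r) · cot(kπ/4)^{j₁} ·
    ∏_{i=2}^{r−1} (∏_{j ∈ I_{2^i}^*} cot(jkπ/2^{i+1}))^{j i} = 2^(r−1)`,
where the outer sum is over the odd integers `k` with `1 ≤ k ≤ 2^r − 1` and each inner
product is over the odd integers `j` with `1 ≤ j ≤ 2^i − 1`. -/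
theorem sum_cot_prod_cot_eq_two_pow
    (r : ℕ) (hr : 2 ≤ r) (j₁ : ℕ) (hj₁ : Odd j₁) (hj₁0 : 0 < j₁) (j : ℕ → ℕ) :
    ∑ k ∈ (Finset.range (2 ^ r)).filter (fun k => Odd k),
        Real.cot ((k : ℝ) * π / 2 ^ r) * Real.cot ((k : ℝ) * π / 4) ^ j₁ *
          ∏ i ∈ Finset.Icc 2 (r - 1),
            (∏ l ∈ (Finset.range (2 ^ i)).filter (fun l => Odd l),
                Real.cot ((l : ℝ) * (k : ℝ) * π / 2 ^ (i + 1))) ^ (j i) =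
      2 ^ (r - 1) := by
  obtain ⟨s, rfl⟩ := Nat.exists_eq_add_of_le' hr
  have hdvd : ∀ i ∈ Finset.Icc 2 (s + 2 - 1), 4 ∣ 2 ^ i := fun i hi =>
    pow_dvd_pow 2 (Finset.mem_Icc.1 hi).1
  simpa [pow_succ', ← mul_assoc, show (2 * 2 : ℝ) = 4 by norm_num] using
    sum_cot_prod_cot_eq_two_pow_general (2 ^ s) hj₁.natCast _ hdvd (fun i => j i)
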